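/- arXiv:1505.06908 — 5 statements merged into one kernel-verified Lean document; each statement's English description precedes it below -/
import Mathlib

section
/- Let f : ℂ → ℂ be an entire function of exponential type τ > 0 whose restriction to the real line is integrable, with ∫_{-∞}^{∞} |f(x)| dx = M < ∞. Then for every real number a with |a| > τ, the Fourier integral vanishes: ∫_{-∞}^{∞} e^{i a x} f(x) dx = 0. -/
open MeasureTheory Real Complex

/-- `f` is (entire) of exponential type `τ`. -/
def ExpType (τ : ℝ) (f : ℂ → ℂ) : Prop :=
  ∀ ε > 0, ∃ R > 0, ∀ z : ℂ, R ≤ ‖z‖ → ‖f z‖ ≤ Real.exp ((τ + ε) * ‖z‖)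

/-!
Let `G` be the primitive of `f` with `G 0 = 0`. It inherits the exponential type `τ` of `f`, and on
the real line it is bounded by `M = ∫ ‖f‖`, so by Phragmén–Lindelöf `‖G z‖ ≤ M e^{τ |Im z|}`.
Cauchy's estimate on unit circles turns this into `‖f z‖ ≤ M e^τ e^{τ |Im z|}`. For `τ ≤ a` the
function `z ↦ e^{iaz} f z` is therefore bounded on the upper half-plane. Divided by `(1 - iεz)²` it
decays fast enough to have integral zero over the real line, by Cauchy's theorem on the rectangles
`[-R, R] × [0, R]`, and `ε → 0` by dominated convergence. For `a < 0`, reflect `z ↦ -z`.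
-/

open Asymptotics Bornology Filter Metric Set Topology

variable {E : Type*} [NormedAddCommGroup E] {f G : ℂ → E} {M b σ τ : ℝ}

/-- The function `f` has exponential type at most `τ`. This is `ExpType` for vector-valued
functions, with a multiplicative constant allowed in the bound; since `b > τ` is arbitrary, that
does not change the notion. -/
def ExpTypeLE (τ : ℝ) (f : ℂ → E) : Prop :=
  ∀ b > τ, f =O[cobounded ℂ] fun z ↦ Real.exp (b * ‖z‖)

theorem ExpType.expTypeLE {f : ℂ → ℂ} (hf : ExpType τ f) : ExpTypeLE τ f := by
  intro b hb
  obtain ⟨R, -, hR⟩ := hf (b - τ) (sub_pos.2 hb)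
  refine .of_norm_eventuallyLE ?_
  filter_upwards [eventually_cobounded_le_norm R] with z hz
  simpa using hR z hz

namespace ExpTypeLE

theorem mono (hf : ExpTypeLE σ f) (h : σ ≤ τ) : ExpTypeLE τ f :=
  fun b hb ↦ hf b (h.trans_lt hb)

theorem comp_neg (hf : ExpTypeLE τ f) : ExpTypeLE τ fun z ↦ f (-z) := fun b hb ↦ by
  simpa [Function.comp_def] using (hf b hb).comp_tendsto tendsto_neg_cobounded

theorem exists_norm_le (hf : ExpTypeLE τ f) (hc : Continuous f) (hb : τ < b) :
    ∃ C, 0 ≤ C ∧ ∀ z, ‖f z‖ ≤ C * Real.exp (b * ‖z‖) := by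
  obtain ⟨A, hA⟩ := (hf b hb).bound
  obtain ⟨R, -, hR⟩ := (hasBasis_cobounded_norm (E := ℂ)).eventually_iff.1 hA
  have hexp : Continuous fun z : ℂ ↦ Real.exp (b * ‖z‖) := by fun_prop
  obtain ⟨B, hB⟩ := (isCompact_closedBall (0 : ℂ) R).exists_bound_of_continuousOn
    (hc.norm.div hexp fun z ↦ (Real.exp_pos _).ne').continuousOn
  refine ⟨max (max A B) 0, le_max_right _ _, fun z ↦ ?_⟩
  rcases le_total R ‖z‖ with hz | hz
  · refine (hR hz).trans ?_
    rw [Real.norm_of_nonneg (Real.exp_pos _).le]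
    gcongr
    exact (le_max_left A B).trans (le_max_left _ _)
  · rw [← div_le_iff₀ (Real.exp_pos _)]
    have hzB := (le_abs_self _).trans (hB z (by simpa using hz))
    exact hzB.trans ((le_max_right A B).trans (le_max_left _ _))

variable [NormedSpace ℂ E]

theorem of_hasDerivAt (hf : ExpTypeLE τ f) (hτ : 0 ≤ τ) (hc : Continuous f)
    (hG : ∀ z, HasDerivAt G (f z) z) : ExpTypeLE τ G := by
  intro b hb
  obtain ⟨c, hτc, hcb⟩ := exists_between hb
  obtain ⟨C, hC0, hC⟩ := hf.exists_norm_le hc hτc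
  have hc0 : 0 ≤ c := hτ.trans hτc.le
  have hmean (z : ℂ) : ‖G z - G 0‖ ≤ C * Real.exp (c * ‖z‖) * ‖z‖ := by
    have h := (convex_closedBall (0 : ℂ) ‖z‖).norm_image_sub_le_of_norm_hasDerivWithin_le
      (x := 0) (y := z) (C := C * Real.exp (c * ‖z‖)) (fun w _ ↦ (hG w).hasDerivWithinAt)
      (fun w hw ↦ (hC w).trans (by gcongr; simpa using hw)) (by simp) (by simp)
    simpa using h
  have hconst : (fun _ ↦ G 0 : ℂ → E) =O[cobounded ℂ] fun z ↦ Real.exp (b * ‖z‖) := by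
    refine .of_bound ‖G 0‖ (.of_forall fun z ↦ ?_)
    rw [Real.norm_of_nonneg (Real.exp_pos _).le]
    have hb0 : 0 ≤ b := hτ.trans hb.le
    exact le_mul_of_one_le_right (norm_nonneg _) (Real.one_le_exp (by positivity))
  have hdiff : (fun z ↦ G z - G 0) =O[cobounded ℂ] fun z ↦ Real.exp (b * ‖z‖) := by
    refine .of_bound (C / (b - c)) (.of_forall fun z ↦ (hmean z).trans ?_)
    rw [Real.norm_of_nonneg (Real.exp_pos _).le]
    have hlin : ‖z‖ ≤ Real.exp ((b - c) * ‖z‖) / (b - c) := by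
      rw [le_div_iff₀ (sub_pos.2 hcb)]
      linarith [Real.add_one_le_exp ((b - c) * ‖z‖)]
    calc C * Real.exp (c * ‖z‖) * ‖z‖
        ≤ C * Real.exp (c * ‖z‖) * (Real.exp ((b - c) * ‖z‖) / (b - c)) := by gcongr
      _ = C / (b - c) * (Real.exp (c * ‖z‖) * Real.exp ((b - c) * ‖z‖)) := by ring
      _ = C / (b - c) * Real.exp (b * ‖z‖) := by rw [← Real.exp_add]; ring_nf
  simpa using hdiff.add hconst

end ExpTypeLE

variable [NormedSpace ℂ E]

theorem norm_le_mul_exp_re_of_diffContOnCl (hd : DiffContOnCl ℂ f {z | 0 < z.re})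
    (hexp : f =O[cobounded ℂ ⊓ 𝓟 {z | 0 < z.re}] fun z ↦ Real.exp (b * ‖z‖))
    (him : ∀ x : ℝ, ‖f (x * I)‖ ≤ M) {z : ℂ} (hz : 0 ≤ z.re) :
    ‖f z‖ ≤ M * Real.exp (b * z.re) := by
  have hnorm (w : ℂ) : ‖Complex.exp (-b * w) • f w‖ = Real.exp (-b * w.re) * ‖f w‖ := by
    simp [norm_smul, Complex.norm_exp]
  have hgrowth : (fun w ↦ Complex.exp (-b * w) • f w) =O[cobounded ℂ ⊓ 𝓟 {z | 0 < z.re}]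
      fun w ↦ Real.exp ((|b| + b) * ‖w‖ ^ (1 : ℝ)) := by
    have hfactor : (fun w : ℂ ↦ Complex.exp (-b * w)) =O[cobounded ℂ ⊓ 𝓟 {z | 0 < z.re}]
        fun w ↦ Real.exp (|b| * ‖w‖) := by
      refine .of_norm_le fun w ↦ ?_
      rw [Complex.norm_exp]
      gcongr
      exact (Complex.re_le_norm _).trans (by simp)
    simpa [← Real.exp_add, add_mul] using hfactor.smul hexp
  have hreal : IsBoundedUnder (· ≤ ·) atTop fun x : ℝ ↦ ‖Complex.exp (-b * x) • f x‖ := by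
    have hray : Tendsto (fun x : ℝ ↦ (x : ℂ)) atTop (cobounded ℂ ⊓ 𝓟 {z | 0 < z.re}) :=
      tendsto_inf.2 ⟨RCLike.tendsto_ofReal_atTop_cobounded ℂ,
        tendsto_principal.2 (by simpa using eventually_gt_atTop (0 : ℝ))⟩
    obtain ⟨C, hC⟩ := (hexp.comp_tendsto hray).bound
    refine ⟨C, eventually_map.2 ?_⟩
    filter_upwards [hC, eventually_ge_atTop 0] with x hx hx0
    rw [hnorm, Complex.ofReal_re, neg_mul, Real.exp_neg, inv_mul_le_iff₀' (Real.exp_pos _)]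
    simpa [abs_of_nonneg hx0] using hx
  have key : ‖Complex.exp (-b * z) • f z‖ ≤ M := by
    refine PhragmenLindelof.right_half_plane_of_bounded_on_real
      (.smul (Differentiable.diffContOnCl (by fun_prop)) hd)
      ⟨1, one_lt_two, |b| + b, hgrowth⟩ hreal (fun x ↦ ?_) hz
    rw [hnorm]
    simpa using him x
  rwa [hnorm, neg_mul, Real.exp_neg, inv_mul_le_iff₀' (Real.exp_pos _)] at key

theorem norm_le_mul_exp_im_of_diffContOnCl (hd : DiffContOnCl ℂ f {z | 0 < z.im})
    (hexp : f =O[cobounded ℂ ⊓ 𝓟 {z | 0 < z.im}] fun z ↦ Real.exp (b * ‖z‖))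
    (hre : ∀ x : ℝ, ‖f x‖ ≤ M) {z : ℂ} (hz : 0 ≤ z.im) :
    ‖f z‖ ≤ M * Real.exp (b * z.im) := by
  have hmaps : MapsTo (I * ·) {w : ℂ | 0 < w.re} {z : ℂ | 0 < z.im} := fun w hw ↦ by simpa using hw
  have hrot : Tendsto (I * ·) (cobounded ℂ ⊓ 𝓟 {w | 0 < w.re}) (cobounded ℂ ⊓ 𝓟 {z | 0 < z.im}) :=
    (tendsto_mul_left_cobounded I_ne_zero).inf hmaps.tendsto
  have hI : I * (-I * z) = z := by simp [← mul_assoc]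
  have him : (-I * z).re = z.im := by simp
  have key := norm_le_mul_exp_re_of_diffContOnCl (f := fun w ↦ f (I * w)) (z := -I * z) (b := b)
    (hd.comp (Differentiable.diffContOnCl (by fun_prop)) hmaps)
    (by simpa [Function.comp_def] using hexp.comp_tendsto hrot)
    (fun x ↦ by simpa [mul_left_comm I] using hre (-x)) (by simpa using hz)
  rwa [hI, him] at key

theorem ExpTypeLE.norm_le_mul_exp_abs_im (hf : ExpTypeLE τ f) (hd : Differentiable ℂ f)
    (hre : ∀ x : ℝ, ‖f x‖ ≤ M) (z : ℂ) : ‖f z‖ ≤ M * Real.exp (τ * |z.im|) := by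
  have hlarger : ∀ b > τ, ‖f z‖ ≤ M * Real.exp (b * |z.im|) := by
    intro b hb
    rcases le_total 0 z.im with hz | hz
    · rw [abs_of_nonneg hz]
      exact norm_le_mul_exp_im_of_diffContOnCl hd.diffContOnCl ((hf b hb).mono inf_le_left) hre hz
    · rw [abs_of_nonpos hz]
      simpa using norm_le_mul_exp_im_of_diffContOnCl (f := fun w ↦ f (-w)) (z := -z)
        (Differentiable.diffContOnCl (by fun_prop)) ((hf.comp_neg b hb).mono inf_le_left)
        (fun x ↦ by simpa using hre (-x)) (by simpa using hz)
  have hlim : Tendsto (fun b ↦ M * Real.exp (b * |z.im|)) (𝓝[>] τ)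
      (𝓝 (M * Real.exp (τ * |z.im|))) :=
    (Continuous.tendsto (by fun_prop) τ).mono_left nhdsWithin_le_nhds
  exact ge_of_tendsto hlim (eventually_nhdsWithin_of_forall hlarger)

theorem norm_deriv_le_mul_exp_abs_im (hG : Differentiable ℂ G) (hτ : 0 ≤ τ)
    (hb : ∀ z, ‖G z‖ ≤ M * Real.exp (τ * |z.im|)) (z : ℂ) :
    ‖deriv G z‖ ≤ M * Real.exp τ * Real.exp (τ * |z.im|) := by
  have hM : 0 ≤ M := by simpa using (norm_nonneg _).trans (hb 0)
  suffices hsphere : ∀ w ∈ sphere z 1, ‖G w‖ ≤ M * Real.exp τ * Real.exp (τ * |z.im|) by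
    simpa using norm_deriv_le_of_forall_mem_sphere_norm_le one_pos hG.diffContOnCl hsphere
  intro w hw
  have him : |w.im| ≤ 1 + |z.im| := by
    have hdist : |(w - z).im| ≤ 1 := (abs_im_le_norm _).trans (mem_sphere_iff_norm.1 hw).le
    rw [sub_im] at hdist
    linarith [abs_sub_abs_le_abs_sub w.im z.im]
  calc ‖G w‖ ≤ M * Real.exp (τ * |w.im|) := hb w
    _ ≤ M * Real.exp (τ * (1 + |z.im|)) := by gcongr
    _ = M * Real.exp τ * Real.exp (τ * |z.im|) := by
      rw [mul_add, mul_one, Real.exp_add, mul_assoc]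

theorem norm_sub_le_integral_norm_of_hasDerivAt {F : Type*} [NormedAddCommGroup F]
    [NormedSpace ℝ F] [CompleteSpace F] {g g' : ℝ → F} (hg : ∀ x, HasDerivAt g (g' x) x)
    (hint : Integrable g') (x y : ℝ) : ‖g y - g x‖ ≤ ∫ t, ‖g' t‖ := by
  rw [← intervalIntegral.integral_eq_sub_of_hasDerivAt (fun t _ ↦ hg t) hint.intervalIntegrable]
  exact intervalIntegral.norm_integral_le_integral_norm_uIoc.trans
    (setIntegral_le_integral hint.norm (.of_forall fun _ ↦ norm_nonneg _))

theorem ExpTypeLE.norm_le_integral_norm_mul_exp [CompleteSpace E] (hf : ExpTypeLE τ f)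
    (hτ : 0 ≤ τ) (hd : Differentiable ℂ f) (hint : Integrable fun x : ℝ ↦ f x) (z : ℂ) :
    ‖f z‖ ≤ (∫ x : ℝ, ‖f x‖) * Real.exp τ * Real.exp (τ * |z.im|) := by
  obtain ⟨G, hG0, hG⟩ := hd.isExactOn_univ.with_val_at 0 0
  replace hG (w : ℂ) : HasDerivAt G (f w) w := hG w (mem_univ w)
  have hGd : Differentiable ℂ G := fun w ↦ (hG w).differentiableAt
  have hGreal (x : ℝ) : ‖G x‖ ≤ ∫ x : ℝ, ‖f x‖ := by
    have hGderiv (t : ℝ) : HasDerivAt (fun t : ℝ ↦ G t) (f t) t := by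
      simpa [Function.comp_def] using (hG t).scomp t ofRealCLM.hasDerivAt
    simpa [hG0] using norm_sub_le_integral_norm_of_hasDerivAt hGderiv hint 0 x
  rw [← (hG z).deriv]
  exact norm_deriv_le_mul_exp_abs_im hGd hτ
    ((hf.of_hasDerivAt hτ hd.continuous hG).norm_le_mul_exp_abs_im hGd hGreal) z

theorem norm_intervalIntegral_le_of_norm_le_upperHalfPlane {R B : ℝ}
    (hd : DiffContOnCl ℂ f {z | 0 < z.im}) (hR : 0 ≤ R)
    (hB : ∀ z : ℂ, 0 ≤ z.im → R ≤ ‖z‖ → ‖f z‖ ≤ B) :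
    ‖∫ x in (-R)..R, f x‖ ≤ 4 * (B * R) := by
  have hcauchy := integral_boundary_rect_eq_zero_of_continuousOn_of_differentiableOn f
    (-R : ℝ) (R + R * I)
    (hd.continuousOn.mono fun z hz ↦ by
      have hz' : 0 ≤ z.im := by simpa [hR] using hz.2.1
      simpa [closure_setOfPred_lt_im] using hz')
    (hd.differentiableOn.mono fun z hz ↦ by simpa [hR] using hz.2.1)
  simp only [ofReal_re, ofReal_im, add_re, add_im, mul_re, mul_im, I_re, I_im, mul_zero, mul_one,
    zero_mul, sub_zero, add_zero, zero_add, ofReal_zero] at hcauchy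
  set bottom := ∫ x in (-R)..R, f x
  set top := ∫ x in (-R)..R, f (x + R * I)
  set right := ∫ y in (0 : ℝ)..R, f (R + y * I)
  set left := ∫ y in (0 : ℝ)..R, f ((-R : ℝ) + y * I)
  have hbottom : bottom = top - I • right + I • left := by
    rw [← sub_eq_zero, ← hcauchy]; abel
  have htop : ‖top‖ ≤ B * |R - -R| :=
    intervalIntegral.norm_integral_le_of_norm_le_const fun x _ ↦ hB _ (by simpa using hR)
      (by simpa [abs_of_nonneg hR] using abs_im_le_norm (x + R * I))
  have hside (s : ℝ) (hs : |s| = R) : ‖∫ y in (0 : ℝ)..R, f (s + y * I)‖ ≤ B * |R - 0| :=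
    intervalIntegral.norm_integral_le_of_norm_le_const fun y hy ↦ by
      rw [uIoc_of_le hR] at hy
      exact hB _ (by simpa using hy.1.le) (by simpa [hs] using abs_re_le_norm (s + y * I))
  have hright : ‖right‖ ≤ B * |R - 0| := hside R (abs_of_nonneg hR)
  have hleft : ‖left‖ ≤ B * |R - 0| := hside (-R) (by rw [abs_neg, abs_of_nonneg hR])
  rw [sub_zero, abs_of_nonneg hR] at hright hleft
  rw [sub_neg_eq_add, abs_of_nonneg (by positivity)] at htop
  calc ‖bottom‖ ≤ ‖top‖ + ‖I • right‖ + ‖I • left‖ := by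
        rw [hbottom]
        exact (norm_add_le _ _).trans (by gcongr; exact norm_sub_le _ _)
    _ = ‖top‖ + ‖right‖ + ‖left‖ := by simp [norm_smul]
    _ ≤ 4 * (B * R) := by linarith

theorem integral_ofReal_eq_zero_of_tendsto_smul_zero (hd : DiffContOnCl ℂ f {z | 0 < z.im})
    (hlim : Tendsto (fun z ↦ z • f z) (cobounded ℂ ⊓ 𝓟 {z | 0 ≤ z.im}) (𝓝 0))
    (hint : Integrable fun x : ℝ ↦ f x) : ∫ x : ℝ, f x = 0 := by
  refine tendsto_nhds_unique
    (intervalIntegral_tendsto_integral hint tendsto_neg_atTop_atBot tendsto_id) ?_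
  refine NormedAddGroup.tendsto_nhds_zero.2 fun δ hδ ↦ ?_
  have hsmall : ∀ᶠ z in cobounded ℂ ⊓ 𝓟 {z | 0 ≤ z.im}, ‖z • f z‖ < δ / 8 :=
    NormedAddGroup.tendsto_nhds_zero.1 hlim _ (by positivity)
  obtain ⟨r, -, hr⟩ :=
    (hasBasis_cobounded_norm (E := ℂ)).eventually_iff.1 (eventually_inf_principal.1 hsmall)
  filter_upwards [eventually_ge_atTop r, eventually_gt_atTop 0] with R hrR hR
  have hB (z : ℂ) (hz : 0 ≤ z.im) (hRz : R ≤ ‖z‖) : ‖f z‖ ≤ δ / 8 / R := by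
    rw [le_div_iff₀' hR]
    calc R * ‖f z‖ ≤ ‖z‖ * ‖f z‖ := by gcongr
      _ = ‖z • f z‖ := (norm_smul _ _).symm
      _ ≤ δ / 8 := (hr (hrR.trans hRz) hz).le
  calc ‖∫ x in (-R)..R, f x‖ ≤ 4 * (δ / 8 / R * R) :=
        norm_intervalIntegral_le_of_norm_le_upperHalfPlane hd hR.le hB
    _ = δ / 2 := by field_simp; norm_num
    _ < δ := half_lt_self hδ

theorem one_le_norm_one_sub {w : ℂ} (hw : w.re ≤ 0) : 1 ≤ ‖1 - w‖ := by
  have hre : 1 ≤ (1 - w).re := by simpa using hw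
  exact hre.trans (re_le_norm _)

theorem norm_le_norm_one_sub {w : ℂ} (hw : w.re ≤ 0) : ‖w‖ ≤ ‖1 - w‖ := by
  rw [← sq_le_sq₀ (norm_nonneg _) (norm_nonneg _), Complex.sq_norm, Complex.sq_norm, normSq_sub]
  simp only [map_one, one_mul, conj_re]
  linarith

/-- Division by `(1 - iεz)²`: for `ε > 0` this gives a function bounded on the upper half-plane the
decay needed to close the contour, without increasing its norm there. -/
noncomputable def regularize (ε : ℝ) (f : ℂ → E) (z : ℂ) : E := ((1 - I * ε * z) ^ 2)⁻¹ • f z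

section Regularize

variable {ε : ℝ}

theorem re_I_mul_ofReal_mul_nonpos (hε : 0 ≤ ε) {z : ℂ} (hz : 0 ≤ z.im) :
    (I * ε * z).re ≤ 0 := by
  simpa using mul_nonneg hε hz

theorem norm_regularize (z : ℂ) : ‖regularize ε f z‖ = ‖f z‖ / ‖1 - I * ε * z‖ ^ 2 := by
  rw [regularize, norm_smul, norm_inv, norm_pow, inv_mul_eq_div]

theorem norm_regularize_le (hε : 0 ≤ ε) {z : ℂ} (hz : 0 ≤ z.im) :
    ‖regularize ε f z‖ ≤ ‖f z‖ := by
  rw [norm_regularize]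
  have hone := one_le_norm_one_sub (re_I_mul_ofReal_mul_nonpos hε hz)
  exact div_le_self (norm_nonneg _) (one_le_pow₀ hone)

theorem diffContOnCl_regularize (hd : DiffContOnCl ℂ f {z | 0 < z.im}) (hε : 0 ≤ ε) :
    DiffContOnCl ℂ (regularize ε f) {z | 0 < z.im} := by
  refine .smul (.inv (Differentiable.diffContOnCl (by fun_prop)) fun z hz ↦ pow_ne_zero 2 ?_) hd
  have hz' : 0 ≤ z.im := by simpa [closure_setOfPred_lt_im] using hz
  exact norm_pos_iff.1
    (one_pos.trans_le (one_le_norm_one_sub (re_I_mul_ofReal_mul_nonpos hε hz')))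

theorem aestronglyMeasurable_regularize (hf : AEStronglyMeasurable fun x : ℝ ↦ f x) :
    AEStronglyMeasurable fun x : ℝ ↦ regularize ε f x :=
  (by fun_prop : Measurable fun x : ℝ ↦ ((1 - I * ε * x) ^ 2)⁻¹).aestronglyMeasurable.smul hf

theorem integrable_regularize (hint : Integrable fun x : ℝ ↦ f x) (hε : 0 ≤ ε) :
    Integrable fun x : ℝ ↦ regularize ε f x :=
  hint.mono (aestronglyMeasurable_regularize hint.aestronglyMeasurable)
    (.of_forall fun _ ↦ norm_regularize_le hε (by simp))

theorem tendsto_smul_regularize (hb : ∀ z : ℂ, 0 ≤ z.im → ‖f z‖ ≤ M) (hε : 0 < ε) :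
    Tendsto (fun z ↦ z • regularize ε f z) (cobounded ℂ ⊓ 𝓟 {z | 0 ≤ z.im}) (𝓝 0) := by
  have hinv : Tendsto (fun z : ℂ ↦ M / ε ^ 2 * ‖z‖⁻¹) (cobounded ℂ ⊓ 𝓟 {z | 0 ≤ z.im}) (𝓝 0) := by
    simpa using (((tendsto_inv_atTop_zero (𝕜 := ℝ)).comp
      tendsto_norm_cobounded_atTop).const_mul (M / ε ^ 2)).mono_left inf_le_left
  refine squeeze_zero_norm' (eventually_inf_principal.2 ?_) hinv
  filter_upwards [eventually_cobounded_le_norm 1] with z hz hzim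
  have hM : 0 ≤ M := (norm_nonneg _).trans (hb z hzim)
  have hden : ε * ‖z‖ ≤ ‖1 - I * ε * z‖ := by
    simpa [abs_of_pos hε] using norm_le_norm_one_sub (re_I_mul_ofReal_mul_nonpos hε.le hzim)
  calc ‖z • regularize ε f z‖ = ‖z‖ * (‖f z‖ / ‖1 - I * ε * z‖ ^ 2) := by
        rw [norm_smul, norm_regularize]
    _ ≤ ‖z‖ * (M / (ε * ‖z‖) ^ 2) := by gcongr; exact hb z hzim
    _ = M / ε ^ 2 * ‖z‖⁻¹ := by
        have : ‖z‖ ≠ 0 := (one_pos.trans_le hz).ne'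
        field_simp

theorem tendsto_integral_regularize (hint : Integrable fun x : ℝ ↦ f x) :
    Tendsto (fun ε ↦ ∫ x : ℝ, regularize ε f x) (𝓝[>] 0) (𝓝 (∫ x : ℝ, f x)) := by
  refine tendsto_integral_filter_of_dominated_convergence (fun x : ℝ ↦ ‖f x‖)
    (.of_forall fun _ ↦ aestronglyMeasurable_regularize hint.aestronglyMeasurable)
    (eventually_nhdsWithin_of_forall fun _ hε ↦ .of_forall fun x ↦
      norm_regularize_le (le_of_lt hε) (by simp))
    hint.norm (.of_forall fun x ↦ ?_)
  have hcont : ContinuousAt (fun ε : ℝ ↦ regularize ε f x) 0 :=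
    .smul (.inv₀ (by fun_prop) (by simp)) continuousAt_const
  simpa [regularize] using hcont.tendsto.mono_left nhdsWithin_le_nhds

end Regularize

theorem integral_ofReal_eq_zero_of_norm_le_upperHalfPlane (hd : DiffContOnCl ℂ f {z | 0 < z.im})
    (hb : ∀ z : ℂ, 0 ≤ z.im → ‖f z‖ ≤ M) (hint : Integrable fun x : ℝ ↦ f x) :
    ∫ x : ℝ, f x = 0 := by
  refine tendsto_nhds_unique (tendsto_integral_regularize hint)
    (tendsto_const_nhds.congr' (eventually_nhdsWithin_of_forall fun ε hε ↦ ?_))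
  exact (integral_ofReal_eq_zero_of_tendsto_smul_zero (diffContOnCl_regularize hd (le_of_lt hε))
    (tendsto_smul_regularize hb hε) (integrable_regularize hint (le_of_lt hε))).symm

theorem ExpTypeLE.integral_exp_smul_eq_zero [CompleteSpace E] (hf : ExpTypeLE τ f) (hτ : 0 ≤ τ)
    (hd : Differentiable ℂ f) (hint : Integrable fun x : ℝ ↦ f x) {a : ℝ} (ha : τ ≤ a) :
    ∫ x : ℝ, Complex.exp (I * a * x) • f x = 0 := by
  have hnorm (z : ℂ) : ‖Complex.exp (I * a * z) • f z‖ = Real.exp (-(a * z.im)) * ‖f z‖ := by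
    simp [norm_smul, Complex.norm_exp]
  have hbound (z : ℂ) (hz : 0 ≤ z.im) :
      ‖Complex.exp (I * a * z) • f z‖ ≤ (∫ x : ℝ, ‖f x‖) * Real.exp τ := by
    rw [hnorm, Real.exp_neg, inv_mul_le_iff₀' (Real.exp_pos _)]
    refine (hf.norm_le_integral_norm_mul_exp hτ hd hint z).trans ?_
    rw [abs_of_nonneg hz]
    gcongr
  have hexp : Continuous fun x : ℝ ↦ Complex.exp (I * a * x) := by fun_prop
  have hint' : Integrable fun x : ℝ ↦ Complex.exp (I * a * x) • f x :=
    hint.mono (hexp.aestronglyMeasurable.smul hint.aestronglyMeasurable)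
      (.of_forall fun x ↦ by simp [hnorm])
  exact integral_ofReal_eq_zero_of_norm_le_upperHalfPlane
    (f := fun z ↦ Complex.exp (I * a * z) • f z) (Differentiable.diffContOnCl (by fun_prop))
    hbound hint'

theorem fourier_integral_eq_zero_of_expType_general [CompleteSpace E] (hf : ExpTypeLE τ f)
    (hd : Differentiable ℂ f) (hint : Integrable fun x : ℝ ↦ f x) {a : ℝ} (ha : τ ≤ |a|) :
    ∫ x : ℝ, Complex.exp (I * a * x) • f x = 0 := by
  have hf' : ExpTypeLE |a| f := hf.mono ha
  rcases abs_choice a with h | h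
  · exact hf'.integral_exp_smul_eq_zero (abs_nonneg a) hd hint h.le
  · rw [← integral_neg_eq_self]
    simpa using hf'.comp_neg.integral_exp_smul_eq_zero (abs_nonneg a) (by fun_prop)
      (by simpa using hint.comp_neg) h.le

/-- **Vanishing Fourier transform lemma.** If `f` is an entire function of exponential
type `τ > 0` whose restriction to the real line is integrable, then the Fourier
integral `∫ e^{iax} f(x) dx` vanishes for every real `a` with `|a| > τ`. -/
theorem fourier_integral_eq_zero_of_expType
    (f : ℂ → ℂ) (τ : ℝ) (hτ : 0 < τ)
    (hent : Differentiable ℂ f)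
    (htype : ExpType τ f)
    (M : ℝ) (hM : ∫ x : ℝ, ‖f (x : ℂ)‖ = M)
    (hint : Integrable (fun x : ℝ => f (x : ℂ)))
    (a : ℝ) (ha : τ < |a|) :
    ∫ x : ℝ, Complex.exp (Complex.I * a * x) * f (x : ℂ) = 0 :=
  fourier_integral_eq_zero_of_expType_general htype.expTypeLE hent hint ha.le
end

section
/- Let f : ℂ → ℂ be an entire function and let γ > 0. Suppose that for every y ∈ [0, γ] the function x ↦ f(x + iy) is integrable on ℝ, and that sup_{0 ≤ y ≤ γ} |f(x + iy)| → 0 as |x| → ∞. Then for every real a, ∫_{-∞}^{∞} e^{i a x} f(x) dx = e^{-aγ} ∫_{-∞}^{∞} e^{i a x} f(x + iγ) dx. -/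
open MeasureTheory Real Complex

/-!
Cauchy's theorem on the rectangle `[-T, T] × [b, c]` compares the integrals along its two horizontal
edges up to the integrals along the vertical ones, which vanish as `T → ∞` when the integrand is
uniformly small far out in the strip. On a strip of bounded height `|exp (i a z)| = exp (-a Im z)`
is bounded, so multiplying by `exp (i a z)` preserves this decay; on the line at height `y` it
contributes the constant `exp (-a y)` besides the character `exp (i a x)`.
-/

section ContourShift

open Filter Set
open scoped Interval Topology

/-- The filter of neighbourhoods of the two ends `Re z → ±∞` of the strip `ℝ × s`. A function tends
to `0` along it when `sup_{y ∈ s} ‖f (x + i y)‖ → 0` as `|x| → ∞`; a filter avoids the junk value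
of an unbounded supremum. -/
def stripEnds (s : Set ℝ) : Filter ℂ :=
  comap (fun z : ℂ => |z.re|) atTop ⊓ 𝓟 (im ⁻¹' s)

variable {E : Type*} [NormedAddCommGroup E]

theorem tendsto_stripEnds_zero_iff {f : ℂ → E} {s : Set ℝ} :
    Tendsto f (stripEnds s) (𝓝 0) ↔
      ∀ ε > 0, ∃ X : ℝ, ∀ x : ℝ, X ≤ |x| → ∀ y ∈ s, ‖f (x + y * I)‖ ≤ ε := by
  have hbasis : (stripEnds s).HasBasis (fun _ : ℝ => True)
      fun X => (fun z : ℂ => |z.re|) ⁻¹' Ici X ∩ im ⁻¹' s :=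
    (atTop_basis.comap _).inf_principal _
  simp only [hbasis.tendsto_iff Metric.nhds_basis_closedBall, true_and, mem_closedBall_zero_iff]
  refine forall₂_congr fun ε _ => exists_congr fun X => ⟨fun h x hx y hy => ?_, fun h z hz => ?_⟩
  · exact h _ ⟨by simpa using hx, by simpa using hy⟩
  · simpa only [re_add_im] using h z.re hz.1 z.im hz.2

theorem isBoundedUnder_norm_stripEnds_of_continuous_im {g : ℝ → E} (hg : Continuous g) {s : Set ℝ}
    (hs : Bornology.IsBounded s) :
    IsBoundedUnder (· ≤ ·) (stripEnds s) fun z => ‖g z.im‖ := by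
  obtain ⟨C, hC⟩ := hs.isCompact_closure.exists_bound_of_continuousOn hg.continuousOn
  exact isBoundedUnder_of_eventually_le <|
    mem_inf_of_right (mem_principal.mpr fun z hz => hC z.im (subset_closure hz))

theorem tendsto_intervalIntegral_vertical_zero [NormedSpace ℝ E] {ι : Type*} {l : Filter ι}
    {x : ι → ℝ} (hx : Tendsto (fun i => |x i|) l atTop) {f : ℂ → E} {b c : ℝ}
    (hf : Tendsto f (stripEnds [[b, c]]) (𝓝 0)) :
    Tendsto (fun i => ∫ y : ℝ in b..c, f (x i + y * I)) l (𝓝 0) := by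
  refine Metric.nhds_basis_closedBall.tendsto_right_iff.mpr fun ε hε => ?_
  have hlen : 0 < |c - b| + 1 := by positivity
  obtain ⟨X, hX⟩ := tendsto_stripEnds_zero_iff.mp hf (ε / (|c - b| + 1)) (by positivity)
  filter_upwards [hx.eventually_ge_atTop X] with i hi
  rw [mem_closedBall_zero_iff]
  calc ‖∫ y : ℝ in b..c, f (x i + y * I)‖
      ≤ ε / (|c - b| + 1) * |c - b| :=
        intervalIntegral.norm_integral_le_of_norm_le_const fun y hy =>
          hX (x i) hi y (uIoc_subset_uIcc hy)
    _ ≤ ε / (|c - b| + 1) * (|c - b| + 1) := by gcongr; linarith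
    _ = ε := div_mul_cancel₀ ε hlen.ne'

variable [NormedSpace ℂ E]

theorem tendsto_sub_intervalIntegral_horizontal_zero {f : ℂ → E} {b c : ℝ}
    (hcont : ContinuousOn f (im ⁻¹' [[b, c]]))
    (hdiff : DifferentiableOn ℂ f (im ⁻¹' Ioo (min b c) (max b c)))
    (hdecay : Tendsto f (stripEnds [[b, c]]) (𝓝 0)) :
    Tendsto (fun T : ℝ => (∫ x : ℝ in -T..T, f (x + b * I)) - ∫ x : ℝ in -T..T, f (x + c * I))
      atTop (𝓝 0) := by
  have hright : Tendsto (fun T : ℝ => ∫ y : ℝ in b..c, f (T + y * I)) atTop (𝓝 0) :=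
    tendsto_intervalIntegral_vertical_zero tendsto_abs_atTop_atTop hdecay
  have hleft : Tendsto (fun T : ℝ => ∫ y : ℝ in b..c, f ((-T : ℝ) + y * I)) atTop (𝓝 0) :=
    tendsto_intervalIntegral_vertical_zero
      (tendsto_abs_atBot_atTop.comp tendsto_neg_atTop_atBot) hdecay
  have hedges := (hleft.const_smul I).sub (hright.const_smul I)
  rw [smul_zero, sub_zero] at hedges
  refine hedges.congr fun T => ?_
  have hcauchy := integral_boundary_rect_eq_zero_of_continuousOn_of_differentiableOn f
    ⟨-T, b⟩ ⟨T, c⟩ (hcont.mono fun z hz => hz.2) (hdiff.mono fun z hz => hz.2)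
  rw [sub_eq_zero, ← eq_sub_iff_add_eq] at hcauchy
  exact hcauchy.symm

theorem integral_horizontal_eq_of_tendsto_stripEnds {f : ℂ → E} {b c : ℝ}
    (hcont : ContinuousOn f (im ⁻¹' [[b, c]]))
    (hdiff : DifferentiableOn ℂ f (im ⁻¹' Ioo (min b c) (max b c)))
    (hdecay : Tendsto f (stripEnds [[b, c]]) (𝓝 0))
    (hb : Integrable fun x : ℝ => f (x + b * I)) (hc : Integrable fun x : ℝ => f (x + c * I)) :
    ∫ x : ℝ, f (x + b * I) = ∫ x : ℝ, f (x + c * I) := by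
  have hlim {g : ℝ → E} (hg : Integrable g) :
      Tendsto (fun T : ℝ => ∫ x in -T..T, g x) atTop (𝓝 (∫ x, g x)) :=
    intervalIntegral_tendsto_integral hg tendsto_neg_atTop_atBot tendsto_id
  exact sub_eq_zero.mp <| tendsto_nhds_unique ((hlim hb).sub (hlim hc))
    (tendsto_sub_intervalIntegral_horizontal_zero hcont hdiff hdecay)

theorem exp_I_mul_mul_add_mul_I (a x y : ℂ) :
    cexp (I * a * (x + y * I)) = cexp (-(a * y)) * cexp (I * a * x) := by
  rw [← Complex.exp_add]
  congr 1
  linear_combination a * y * I_mul_I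

theorem norm_exp_I_mul_ofReal_mul (a : ℝ) (z : ℂ) :
    ‖cexp (I * a * z)‖ = rexp (-(a * z.im)) := by
  simp [Complex.norm_exp]

theorem integrable_exp_I_mul_smul {μ : Measure ℝ} {g : ℝ → E} (hg : Integrable g μ) (a y : ℝ) :
    Integrable (fun x : ℝ => cexp (I * a * (x + y * I)) • g x) μ :=
  hg.bdd_smul (rexp (-(a * y))) (by fun_prop) <| .of_forall fun x => by
    simp [norm_exp_I_mul_ofReal_mul]

theorem integral_exp_I_mul_smul (μ : Measure ℝ) (g : ℝ → E) (a y : ℂ) :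
    ∫ x : ℝ, cexp (I * a * (x + y * I)) • g x ∂μ =
      cexp (-(a * y)) • ∫ x : ℝ, cexp (I * a * x) • g x ∂μ := by
  simp only [exp_I_mul_mul_add_mul_I, mul_smul, integral_smul]

theorem tendsto_exp_I_mul_smul_stripEnds {f : ℂ → E} {s : Set ℝ} (hs : Bornology.IsBounded s)
    (hf : Tendsto f (stripEnds s) (𝓝 0)) (a : ℝ) :
    Tendsto (fun z => cexp (I * a * z) • f z) (stripEnds s) (𝓝 0) := by
  refine IsBoundedUnder.smul_tendsto_zero ?_ hf
  have hbdd := isBoundedUnder_norm_stripEnds_of_continuous_im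
    (g := fun y => rexp (-(a * y))) (by fun_prop) hs
  simpa only [Function.comp_def, norm_exp_I_mul_ofReal_mul, Real.norm_eq_abs, Real.abs_exp]
    using hbdd

theorem fourier_integral_contour_shift_general [CompleteSpace E] {f : ℂ → E} {γ : ℝ}
    (hcont : ContinuousOn f (im ⁻¹' [[0, γ]]))
    (hdiff : DifferentiableOn ℂ f (im ⁻¹' Ioo (min 0 γ) (max 0 γ)))
    (hint_zero : Integrable fun x : ℝ => f x)
    (hint_γ : Integrable fun x : ℝ => f (x + γ * I))
    (hdecay : Tendsto f (stripEnds [[0, γ]]) (𝓝 0)) (a : ℝ) :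
    ∫ x : ℝ, cexp (I * a * x) • f x =
      cexp (-(a * γ)) • ∫ x : ℝ, cexp (I * a * x) • f (x + γ * I) := by
  have hexp : Differentiable ℂ fun z : ℂ => cexp (I * a * z) := by fun_prop
  have hshift := integral_horizontal_eq_of_tendsto_stripEnds
    (hexp.continuous.continuousOn.smul hcont) (hexp.differentiableOn.smul hdiff)
    (tendsto_exp_I_mul_smul_stripEnds isCompact_uIcc.isBounded hdecay a)
    (integrable_exp_I_mul_smul (by simpa using hint_zero) a 0)
    (integrable_exp_I_mul_smul hint_γ a γ)
  rw [← integral_exp_I_mul_smul]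
  simpa using hshift

end ContourShift

/-- **Contour-shift identity.** For an entire function `f` that is integrable on every
horizontal line at height `y ∈ [0, γ]` and decays (uniformly in `y ∈ [0, γ]`) as
`|x| → ∞`, the Fourier integral along the real line equals `e^{-aγ}` times the Fourier
integral along the line at height `γ`. -/
theorem fourier_integral_contour_shift
    (f : ℂ → ℂ) (γ : ℝ) (hγ : 0 < γ)
    (hent : Differentiable ℂ f)
    (hint : ∀ y ∈ Set.Icc (0 : ℝ) γ,
      Integrable (fun x : ℝ => f ((x : ℂ) + y * Complex.I)))
    (hdecay : ∀ ε > 0, ∃ X : ℝ, ∀ x : ℝ, X ≤ |x| →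
      ∀ y ∈ Set.Icc (0 : ℝ) γ, ‖f ((x : ℂ) + y * Complex.I)‖ ≤ ε)
    (a : ℝ) :
    ∫ x : ℝ, Complex.exp (Complex.I * a * x) * f (x : ℂ)
      = Complex.exp (-(a * γ)) *
        ∫ x : ℝ, Complex.exp (Complex.I * a * x) * f ((x : ℂ) + γ * Complex.I) :=
  fourier_integral_contour_shift_general hent.continuous.continuousOn hent.differentiableOn
    (by simpa using hint 0 ⟨le_rfl, hγ.le⟩) (hint γ ⟨hγ.le, le_rfl⟩)
    (tendsto_stripEnds_zero_iff.mpr (by rwa [Set.uIcc_of_le hγ.le])) a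
end

section
/- Let f : ℂ → ℂ be an entire function of exponential type τ ≥ 0 whose restriction to the real line satisfies ∫_{-∞}^{∞} |f(x)| dx = M < ∞. Then for every real y, ∫_{-∞}^{∞} |f(x + iy)| dx ≤ M·e^{τ |y|}. -/
open MeasureTheory Real Complex

/-!
By the Phragmén–Lindelöf principle, a function of exponential type `τ` with values in any normed
space and bounded by `M` on `ℝ` is bounded by `M * exp (τ * |im z|)` at every `z`. The `L^p`
estimate is this bound for a single vector-valued function: for `N > 0`, the map sending `z` to the
class of `t ↦ f (z + t)` in `L^p([-N, N])` is entire of exponential type `τ`, and on `ℝ` it is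
bounded by the `L^p` norm of `f` on the real line. Letting `N → ∞` gives the estimate on the whole
line.
-/

open Filter Topology Bornology Asymptotics
open scoped ENNReal NNReal

section HasExpType

variable {E F : Type*} [NormedAddCommGroup E] [NormedAddCommGroup F] {f : ℂ → E} {τ : ℝ}

/-- A vector-valued function on `ℂ` is of exponential type `τ`: the analogue of `ExpType`, with the
growth condition stated up to a multiplicative constant so that it passes to bounded linear images
and to families of translates. -/
def HasExpType (τ : ℝ) (f : ℂ → E) : Prop :=
  ∀ ε > 0, f =O[cobounded ℂ] fun z ↦ Real.exp ((τ + ε) * ‖z‖)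

theorem ExpType.hasExpType {f : ℂ → ℂ} (hf : ExpType τ f) : HasExpType τ f := by
  intro ε hε
  obtain ⟨R, -, hR⟩ := hf ε hε
  refine .of_bound 1 ?_
  filter_upwards [eventually_cobounded_le_norm R] with z hz
  simpa using hR z hz

-- Phragmén–Lindelöf applies to `exp (-σ w) • f w`, which is bounded on the positive real axis.
theorem norm_le_mul_exp_re_of_isBigO_exp [NormedSpace ℂ E] {σ M : ℝ}
    (hd : DiffContOnCl ℂ f {w | 0 < w.re})
    (hσ : f =O[cobounded ℂ ⊓ 𝓟 {w | 0 < w.re}] fun w ↦ Real.exp (σ * ‖w‖))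
    (hM : ∀ x : ℝ, ‖f (x * I)‖ ≤ M) {z : ℂ} (hz : 0 ≤ z.re) :
    ‖f z‖ ≤ M * Real.exp (σ * z.re) := by
  have norm_twist (w : ℂ) : ‖cexp (-σ * w) • f w‖ = Real.exp (-σ * w.re) * ‖f w‖ := by
    simp [norm_smul, Complex.norm_exp]
  have growth : (fun w ↦ cexp (-σ * w) • f w) =O[cobounded ℂ ⊓ 𝓟 {w | 0 < w.re}]
      fun w ↦ Real.exp ((|σ| + σ) * ‖w‖ ^ (1 : ℝ)) := by
    have hexp : (fun w ↦ cexp (-σ * w)) =O[cobounded ℂ ⊓ 𝓟 {w | 0 < w.re}]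
        fun w ↦ Real.exp (|σ| * ‖w‖) :=
      .of_norm_le fun w ↦ by simpa using Complex.norm_exp_le_exp_norm (-σ * w)
    simpa [add_mul, Real.exp_add] using hexp.smul hσ
  have bounded_on_real : (fun x : ℝ ↦ cexp (-σ * x) • f x) =O[atTop] fun _ ↦ (1 : ℝ) := by
    have hf : (fun x : ℝ ↦ f x) =O[atTop] fun x : ℝ ↦ Real.exp (σ * ‖(x : ℂ)‖) :=
      hσ.comp_tendsto <| tendsto_inf.2 ⟨RCLike.tendsto_ofReal_atTop_cobounded ℂ,
        tendsto_principal.2 <| (eventually_gt_atTop 0).mono fun x hx ↦ by simpa using hx⟩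
    have hexp : (fun x : ℝ ↦ cexp (-σ * x)) =O[atTop] fun x : ℝ ↦ Real.exp (-σ * x) :=
      .of_norm_le fun x ↦ by simp [Complex.norm_exp]
    refine (hexp.smul hf).congr' .rfl ?_
    filter_upwards [eventually_ge_atTop 0] with x hx
    simp [abs_of_nonneg hx, ← Real.exp_add]
  have key : ‖cexp (-σ * z) • f z‖ ≤ M :=
    PhragmenLindelof.right_half_plane_of_bounded_on_real (f := fun w ↦ cexp (-σ * w) • f w)
      (.smul (Differentiable.diffContOnCl (by fun_prop)) hd) ⟨1, one_lt_two, _, growth⟩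
      ((isBigO_one_iff ℝ).1 bounded_on_real) (fun x ↦ by rw [norm_twist]; simpa using hM x) hz
  rwa [norm_twist, neg_mul, Real.exp_neg, inv_mul_le_iff₀' (Real.exp_pos _)] at key

namespace HasExpType

theorem comp_mul_right (hf : HasExpType τ f) {c : ℂ} (hc : ‖c‖ = 1) :
    HasExpType τ fun z ↦ f (z * c) := by
  intro ε hε
  have hc₀ : c ≠ 0 := norm_ne_zero_iff.1 (by simp [hc])
  simpa [Function.comp_def, hc] using (hf ε hε).comp_tendsto (tendsto_mul_right_cobounded hc₀)

variable [NormedSpace ℂ E] [NormedSpace ℂ F]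

theorem clm_comp (hf : HasExpType τ f) (L : E →L[ℂ] F) : HasExpType τ fun z ↦ L (f z) :=
  fun ε hε ↦ (L.isBigO_comp f _).trans (hf ε hε)

theorem norm_le_mul_exp_re (hf : HasExpType τ f) (hd : Differentiable ℂ f) {M : ℝ}
    (hM : ∀ x : ℝ, ‖f (x * I)‖ ≤ M) {z : ℂ} (hz : 0 ≤ z.re) :
    ‖f z‖ ≤ M * Real.exp (τ * z.re) := by
  have hlim : Tendsto (fun ε ↦ M * Real.exp ((τ + ε) * z.re)) (𝓝[>] 0)
      (𝓝 (M * Real.exp (τ * z.re))) :=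
    tendsto_nhdsWithin_of_tendsto_nhds <| Continuous.tendsto' (by fun_prop) _ _ (by simp)
  exact ge_of_tendsto hlim <| eventually_nhdsWithin_of_forall fun ε hε ↦
    norm_le_mul_exp_re_of_isBigO_exp hd.diffContOnCl ((hf ε hε).mono inf_le_left) hM hz

theorem norm_le_mul_exp_abs_im (hf : HasExpType τ f) (hd : Differentiable ℂ f) {M : ℝ}
    (hM : ∀ x : ℝ, ‖f x‖ ≤ M) (z : ℂ) : ‖f z‖ ≤ M * Real.exp (τ * |z.im|) := by
  obtain hz | hz := le_total 0 z.im
  · have h := (hf.comp_mul_right (c := I) (by simp)).norm_le_mul_exp_re (z := z * -I) (M := M)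
      (by fun_prop) (fun x ↦ by simpa [mul_assoc] using hM (-x)) (by simpa using hz)
    simpa [mul_assoc, abs_of_nonneg hz] using h
  · have h := (hf.comp_mul_right (c := -I) (by simp)).norm_le_mul_exp_re (z := z * I) (M := M)
      (by fun_prop) (fun x ↦ by simpa [mul_assoc] using hM x) (by simpa using hz)
    simpa [mul_assoc, abs_of_nonpos hz] using h

end HasExpType

end HasExpType

section Translates

variable {E X : Type*} [NormedAddCommGroup E] [TopologicalSpace X] (f : C(ℂ, E)) (u : C(X, ℂ))

/-- The curve `z ↦ (t ↦ f (z + u t))` in `C(X, E)`, which packages the values of `f` on all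
translates of the curve `u` into a single function of `z`. -/
noncomputable def translates (z : ℂ) : C(X, E) := f.comp (.const X z + u)

@[simp]
theorem translates_apply (z : ℂ) (t : X) : translates f u z t = f (z + u t) := rfl

theorem continuous_translates : Continuous (translates f u) := by
  unfold translates
  fun_prop

variable [CompactSpace X] {f}

theorem hasExpType_translates {τ : ℝ} (hf : HasExpType τ f) : HasExpType τ (translates f u) := by
  intro ε hε
  obtain ⟨C, hC₀, hC⟩ := (hf ε hε).exists_nonneg
  obtain ⟨R, -, hR⟩ := hasBasis_cobounded_norm.eventually_iff.1 hC.bound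
  refine .of_bound (C * Real.exp (|τ + ε| * ‖u‖)) ?_
  filter_upwards [eventually_cobounded_le_norm (R + ‖u‖)] with z hz
  rw [mul_assoc, Real.norm_eq_abs, Real.abs_exp, ← Real.exp_add]
  refine (ContinuousMap.norm_le _ (by positivity)).2 fun t ↦ ?_
  have hnorm : |‖z + u t‖ - ‖z‖| ≤ ‖u‖ := by
    simpa using (abs_norm_sub_norm_le (z + u t) z).trans (by simpa using u.norm_coe_le_norm t)
  have hexponent : (τ + ε) * ‖z + u t‖ ≤ |τ + ε| * ‖u‖ + (τ + ε) * ‖z‖ := by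
    have hdiff := (le_abs_self _).trans_eq (abs_mul (τ + ε) (‖z + u t‖ - ‖z‖))
    linarith [mul_le_mul_of_nonneg_left hnorm (abs_nonneg (τ + ε))]
  calc ‖f (z + u t)‖ ≤ C * Real.exp ((τ + ε) * ‖z + u t‖) := by
        simpa using hR (show R ≤ ‖z + u t‖ by linarith [(abs_le.1 hnorm).1])
    _ ≤ C * Real.exp (|τ + ε| * ‖u‖ + (τ + ε) * ‖z‖) := by gcongr

variable [NormedSpace ℂ E]

theorem hasDerivAt_translates {f' : C(ℂ, E)} (hf : ∀ w, HasDerivAt f (f' w) w) (z : ℂ) :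
    HasDerivAt (translates f u) (translates f' u z) z := by
  rw [hasDerivAt_iff_isLittleO, isLittleO_iff]
  intro c hc
  obtain ⟨δ, hδ, hball⟩ :=
    Metric.continuousAt_iff.1 (continuous_translates f' u).continuousAt c hc
  filter_upwards [Metric.ball_mem_nhds z hδ] with w hw
  refine (ContinuousMap.norm_le _ (by positivity)).2 fun t ↦ ?_
  have hderiv (v : ℂ) : HasDerivAt (fun v ↦ f (v + u t) - v • f' (z + u t))
      (f' (v + u t) - f' (z + u t)) v := by
    simpa using ((hf (v + u t)).comp_add_const v (u t)).fun_sub ((hasDerivAt_id v).smul_const _)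
  have hnear : ∀ v ∈ Metric.ball z δ, ‖f' (v + u t) - f' (z + u t)‖ ≤ c := fun v hv ↦
    (dist_eq_norm (f' (v + u t)) _).symm.trans_le
      ((ContinuousMap.dist_apply_le_dist t).trans (hball hv).le)
  have mean_value := (convex_ball z δ).norm_image_sub_le_of_norm_hasDerivWithin_le
    (fun v _ ↦ (hderiv v).hasDerivWithinAt) hnear (Metric.mem_ball_self hδ) hw
  convert! mean_value using 2
  simp only [ContinuousMap.sub_apply, ContinuousMap.smul_apply, translates_apply, sub_smul]
  abel

theorem differentiable_translates [CompleteSpace E] (hf : Differentiable ℂ f) :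
    Differentiable ℂ (translates f u) := fun z ↦
  (hasDerivAt_translates (f' := ⟨deriv f, (hf.contDiff (n := 1)).continuous_deriv le_rfl⟩) u
    (fun w ↦ (hf w).hasDerivAt) z).differentiableAt

theorem eLpNorm_translates_le [CompleteSpace E] [SecondCountableTopologyEither X E]
    [MeasurableSpace X] [BorelSpace X] {μ : Measure X} [IsFiniteMeasure μ]
    {p : ℝ≥0∞} [Fact (1 ≤ p)] {τ : ℝ} (hf : HasExpType τ f) (hd : Differentiable ℂ f) {M : ℝ≥0∞}
    (hM : ∀ x : ℝ, eLpNorm (translates f u x) p μ ≤ M) (z : ℂ) :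
    eLpNorm (translates f u z) p μ ≤ M * ENNReal.ofReal (Real.exp (τ * |z.im|)) := by
  obtain rfl | hM_top := eq_or_ne M ∞
  · simp [ENNReal.top_mul, Real.exp_pos]
  lift M to ℝ≥0 using hM_top
  let L : C(X, E) →L[ℂ] Lp E p μ := ContinuousMap.toLp p μ ℂ
  have enorm_L (g : C(X, E)) : ‖L g‖ₑ = eLpNorm g p μ := by
    rw [Lp.enorm_def, eLpNorm_congr_ae (ContinuousMap.coeFn_toLp μ g)]
  have hreal (x : ℝ) : ‖L (translates f u x)‖ ≤ M := by
    rw [← coe_nnnorm, NNReal.coe_le_coe, ← enorm_le_coe, enorm_L]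
    exact hM x
  have hdiff : Differentiable ℂ fun w ↦ L (translates f u w) :=
    L.differentiable.comp (differentiable_translates u hd)
  have hbound := ((hasExpType_translates u hf).clm_comp L).norm_le_mul_exp_abs_im hdiff hreal z
  rw [← enorm_L, ← ofReal_norm, ← ENNReal.ofReal_coe_nnreal, ← ENNReal.ofReal_mul M.coe_nonneg]
  exact ENNReal.ofReal_le_ofReal hbound

end Translates

theorem eLpNorm_le_of_aecover {α ι E : Type*} [MeasurableSpace α] {μ : Measure α}
    [NormedAddCommGroup E] {l : Filter ι} [l.NeBot] [l.IsCountablyGenerated] {φ : ι → Set α}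
    (hφ : AECover μ l φ) {p C : ℝ≥0∞} {g : α → E} (hg : AEStronglyMeasurable g μ)
    (hC : ∀ᶠ i in l, eLpNorm g p (μ.restrict (φ i)) ≤ C) : eLpNorm g p μ ≤ C :=
  Lp.eLpNorm_le_of_ae_tendsto
    (hC.mono fun i hi ↦ by rwa [eLpNorm_indicator_eq_eLpNorm_restrict (hφ.measurableSet i)])
    (fun i ↦ hg.indicator (hφ.measurableSet i)) (hφ.ae_tendsto_indicator g)

theorem eLpNorm_comp_add_left {G E : Type*} [MeasurableSpace G] [AddGroup G] [MeasurableAdd G]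
    {μ : Measure G} [μ.IsAddLeftInvariant] [NormedAddCommGroup E] {p : ℝ≥0∞} (g : G → E) (a : G) :
    eLpNorm (fun x ↦ g (a + x)) p μ = eLpNorm g p μ := by
  have h := (measurableEmbedding_addLeft a).eLpNorm_map_measure (g := g) (p := p) (μ := μ)
  rw [map_add_left_eq_self] at h
  exact h.symm

theorem integral_norm_le_mul_of_eLpNorm_one_le {α E F : Type*} [MeasurableSpace α] {μ : Measure α}
    [NormedAddCommGroup E] [NormedAddCommGroup F] {g : α → E} {h : α → F}
    (hg : AEStronglyMeasurable g μ) (hh : Integrable h μ) {c : ℝ} (hc : 0 ≤ c)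
    (hle : eLpNorm g 1 μ ≤ eLpNorm h 1 μ * ENNReal.ofReal c) :
    ∫ a, ‖g a‖ ∂μ ≤ (∫ a, ‖h a‖ ∂μ) * c := by
  rw [integral_norm_eq_lintegral_enorm hg, integral_norm_eq_lintegral_enorm hh.1,
    ← eLpNorm_one_eq_lintegral_enorm, ← eLpNorm_one_eq_lintegral_enorm,
    ← ENNReal.toReal_ofReal hc, ← ENNReal.toReal_mul]
  exact ENNReal.toReal_mono
    (ENNReal.mul_ne_top (memLp_one_iff_integrable.2 hh).eLpNorm_ne_top ENNReal.ofReal_ne_top) hle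

section HorizontalLine

variable {E : Type*} [NormedAddCommGroup E] [NormedSpace ℂ E] [CompleteSpace E] {p : ℝ≥0∞}
  [Fact (1 ≤ p)] {τ : ℝ}

theorem eLpNorm_restrict_horizontal_line_le {f : C(ℂ, E)} (hd : Differentiable ℂ f)
    (hf : HasExpType τ f) {K : Set ℝ} (hK : IsCompact K) (z : ℂ) :
    eLpNorm (fun t : ℝ ↦ f (z + t)) p (volume.restrict K) ≤
      eLpNorm (fun t : ℝ ↦ f t) p * ENNReal.ofReal (Real.exp (τ * |z.im|)) := by
  let μ : Measure K := volume.comap Subtype.val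
  let u : C(K, ℂ) := ⟨fun t ↦ (t : ℝ), by fun_prop⟩
  have hmp : MeasurePreserving Subtype.val μ (volume.restrict K) :=
    measurePreserving_subtype_coe hK.measurableSet
  have : CompactSpace K := isCompact_iff_compactSpace.1 hK
  have : IsFiniteMeasure μ :=
    ⟨(hmp.measure_preimage nullMeasurableSet_univ).trans_lt
      (by simpa using hK.measure_lt_top (μ := volume))⟩
  have hcont (w : ℂ) : Continuous fun t : ℝ ↦ f (w + t) := by fun_prop
  have eLpNorm_translates (w : ℂ) :
      eLpNorm (translates f u w) p μ = eLpNorm (fun t : ℝ ↦ f (w + t)) p (volume.restrict K) :=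
    eLpNorm_comp_measurePreserving (hcont w).aestronglyMeasurable hmp
  have hreal (x : ℝ) : eLpNorm (translates f u x) p μ ≤ eLpNorm (fun t : ℝ ↦ f t) p := by
    rw [eLpNorm_translates, ← eLpNorm_comp_add_left (fun t : ℝ ↦ f t) x]
    simp only [ofReal_add]
    exact eLpNorm_restrict_le _ p volume K
  exact (eLpNorm_translates z).symm.trans_le (eLpNorm_translates_le u hf hd hreal z)

theorem integral_abs_horizontal_line_le_general {f : ℂ → E} (hent : Differentiable ℂ f)
    (htype : HasExpType τ f) (y : ℝ) :
    eLpNorm (fun x : ℝ ↦ f (x + y * I)) p ≤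
      eLpNorm (fun x : ℝ ↦ f x) p * ENNReal.ofReal (Real.exp (τ * |y|)) := by
  have hcont : Continuous f := hent.continuous
  refine eLpNorm_le_of_aecover (aecover_Icc tendsto_neg_atTop_atBot tendsto_id)
    (Continuous.aestronglyMeasurable (by fun_prop)) (.of_forall fun N ↦ ?_)
  simpa [add_comm] using
    eLpNorm_restrict_horizontal_line_le (f := ⟨f, hcont⟩) hent htype isCompact_Icc (y * I)

end HorizontalLine

/-- **Plancherel–Pólya-type estimate.** If `f` is entire of exponential type `τ ≥ 0`
and its restriction to the real line is integrable with `∫ |f(x)| dx = M`, then for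
every real `y` the integral of `|f|` along the horizontal line at height `y`
is at most `M e^{τ|y|}`. -/
theorem integral_abs_horizontal_line_le
    (f : ℂ → ℂ) (τ : ℝ) (hτ : 0 ≤ τ)
    (hent : Differentiable ℂ f)
    (htype : ExpType τ f)
    (hint : Integrable (fun x : ℝ => f (x : ℂ)))
    (M : ℝ) (hM : ∫ x : ℝ, ‖f (x : ℂ)‖ = M)
    (y : ℝ) :
    (∫ x : ℝ, ‖f ((x : ℂ) + y * Complex.I)‖) ≤ M * Real.exp (τ * |y|) := by
  have hcont : Continuous f := hent.continuous
  exact hM ▸ integral_norm_le_mul_of_eLpNorm_one_le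
    (Continuous.aestronglyMeasurable (by fun_prop)) hint (Real.exp_pos _).le
    (integral_abs_horizontal_line_le_general hent htype.hasExpType y)
end

section
/- Let α > 0 and β > 0. The function φ : ℂ → ℂ defined by φ(z) = 1/(Γ(α + βz) · Γ(α − βz)), where Γ is the complex Gamma function, is entire and of exponential type πβ; that is, for every ε > 0 there exists R > 0 such that |φ(z)| ≤ exp((πβ + ε)·|z|) for all |z| ≥ R. -/
open Real Complex

/-!
Put `F a b w = 1 / (Γ(a + w) Γ(b - w))`. If `Re b ≤ 0` and `Re (a + b) > 1`, the reflection formula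
gives `F a b w = sin (π (b - w)) / π · Γ(1 - b + w) / Γ(a + w)`, and for `Re w ≥ 0` the Gamma
quotient is `B(a + b - 1, 1 - b + w) / Γ(a + b - 1)`, which is bounded; so `F a b` grows like the
sine, with type `π`. The recurrence for `1 / Γ` writes `F a b` as a linear factor times
`F (a + 1) b` and as the inverse of a linear factor times `F a (b - 1)`, and such factors do not
change the type, so the conditions on `a` and `b` can be dropped. The half-plane `Re w ≤ 0` follows
from `F a b (-w) = F b a w`.
-/

open Asymptotics Bornology Filter

section ExponentialType

section Norm

variable {E F : Type*} [Norm E] [Norm F] {f g : E → F} {σ τ : ℝ} {l l' : Filter E}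

/-- `f` has exponential type at most `τ` along the filter `l`. Exponential type in the usual sense
is the case `l = cobounded ℂ`; other filters restrict the growth condition to a half-plane. -/
def HasExpTypeAlong (f : E → F) (τ : ℝ) (l : Filter E) : Prop :=
  ∀ ε > 0, ∀ᶠ z in l, ‖f z‖ ≤ Real.exp ((τ + ε) * ‖z‖)

namespace HasExpTypeAlong

theorem congr' (hf : HasExpTypeAlong f τ l) (h : f =ᶠ[l] g) : HasExpTypeAlong g τ l := by
  intro ε hε
  filter_upwards [hf ε hε, h] with z hz hfg
  rwa [← hfg]

theorem mono (hf : HasExpTypeAlong f τ l) (h : l' ≤ l) : HasExpTypeAlong f τ l' :=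
  fun ε hε => h (hf ε hε)

theorem sup (hf : HasExpTypeAlong f τ l) (hf' : HasExpTypeAlong f τ l') :
    HasExpTypeAlong f τ (l ⊔ l') :=
  fun ε hε => eventually_sup.2 ⟨hf ε hε, hf' ε hε⟩

theorem mul {R : Type*} [NonUnitalSeminormedRing R] {f g : E → R}
    (hf : HasExpTypeAlong f σ l) (hg : HasExpTypeAlong g τ l) :
    HasExpTypeAlong (fun z => f z * g z) (σ + τ) l := by
  intro ε hε
  filter_upwards [hf (ε / 2) (half_pos hε), hg (ε / 2) (half_pos hε)] with z hfz hgz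
  calc ‖f z * g z‖ ≤ ‖f z‖ * ‖g z‖ := norm_mul_le _ _
    _ ≤ Real.exp ((σ + ε / 2) * ‖z‖) * Real.exp ((τ + ε / 2) * ‖z‖) := by gcongr
    _ = Real.exp ((σ + τ + ε) * ‖z‖) := by rw [← Real.exp_add]; ring_nf

end HasExpTypeAlong

end Norm

variable {E E' F : Type*} [SeminormedAddCommGroup E] [SeminormedAddCommGroup E']
  [SeminormedAddCommGroup F] {f : E → F} {τ : ℝ} {l : Filter E}

namespace HasExpTypeAlong

theorem of_isBigO_norm_pow {n : ℕ} (hf : f =O[l] fun z => ‖z‖ ^ n) (hl : l ≤ cobounded E) :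
    HasExpTypeAlong f 0 l := by
  intro ε hε
  have hexp : f =o[l] fun z => Real.exp (ε * ‖z‖) :=
    hf.trans_isLittleO <| (isLittleO_pow_exp_pos_mul_atTop n hε).comp_tendsto
      (tendsto_norm_cobounded_atTop.mono_left hl)
  filter_upwards [hexp.bound one_pos] with z hz
  simpa only [one_mul, Real.norm_eq_abs, Real.abs_exp, zero_add] using hz

theorem of_isBigO_one (hf : f =O[l] fun _ => (1 : ℝ)) (hl : l ≤ cobounded E) :
    HasExpTypeAlong f 0 l :=
  of_isBigO_norm_pow (n := 0) (by simpa only [pow_zero] using hf) hl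

theorem comp {g : E' → E} {l' : Filter E'} {k C : ℝ} (hf : HasExpTypeAlong f τ l) (hτ : 0 ≤ τ)
    (hg : Tendsto g l' l) (hl' : l' ≤ cobounded E') (hk : 0 ≤ k) (hgk : ∀ z, ‖g z‖ ≤ k * ‖z‖ + C) :
    HasExpTypeAlong (fun z => f (g z)) (τ * k) l' := by
  intro ε hε
  obtain ⟨δ, hδ, hδk⟩ : ∃ δ > 0, δ * k ≤ ε / 2 :=
    ⟨ε / 2 / (k + 1), by positivity, by
      rw [div_mul_eq_mul_div, div_le_iff₀ (by positivity)]
      gcongr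
      linarith⟩
  have hlarge : ∀ᶠ z in l', (τ + δ) * C / (ε / 2) ≤ ‖z‖ :=
    hl' (eventually_cobounded_le_norm _)
  filter_upwards [hg.eventually (hf δ hδ), hlarge] with z hfz hz
  rw [div_le_iff₀ (half_pos hε)] at hz
  refine hfz.trans (Real.exp_le_exp.2 ?_)
  calc (τ + δ) * ‖g z‖ ≤ (τ + δ) * (k * ‖z‖ + C) := by gcongr; exact hgk z
    _ = τ * k * ‖z‖ + δ * k * ‖z‖ + (τ + δ) * C := by ring
    _ ≤ τ * k * ‖z‖ + ε / 2 * ‖z‖ + ‖z‖ * (ε / 2) := by gcongr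
    _ = (τ * k + ε) * ‖z‖ := by ring

theorem comp_affine {𝕜 : Type*} [NormedField 𝕜] {f : 𝕜 → F}
    (hf : HasExpTypeAlong f τ (cobounded 𝕜)) (hτ : 0 ≤ τ) (b k : 𝕜) :
    HasExpTypeAlong (fun z => f (b + k * z)) (τ * ‖k‖) (cobounded 𝕜) := by
  rcases eq_or_ne k 0 with rfl | hk
  · simp only [zero_mul, add_zero, norm_zero, mul_zero]
    exact of_isBigO_one (isBigO_const_const _ one_ne_zero _) le_rfl
  · have hg : Tendsto (fun z => b + k * z) (cobounded 𝕜) (cobounded 𝕜) :=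
      (tendsto_const_add_cobounded b).comp (tendsto_mul_left_cobounded hk)
    refine hf.comp (C := ‖b‖) hτ hg le_rfl (norm_nonneg k) fun z => ?_
    rw [← norm_mul, add_comm ‖k * z‖]
    exact norm_add_le _ _

theorem exists_radius (hf : HasExpTypeAlong f τ (cobounded E)) {ε : ℝ} (hε : 0 < ε) :
    ∃ R > 0, ∀ z, R ≤ ‖z‖ → ‖f z‖ ≤ Real.exp ((τ + ε) * ‖z‖) := by
  obtain ⟨R, -, hR⟩ := hasBasis_cobounded_norm.eventually_iff.1 (hf ε hε)
  exact ⟨max R 1, by positivity, fun z hz => hR ((le_max_left R 1).trans hz)⟩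

end HasExpTypeAlong

theorem hasExpTypeAlong_const_add (c : E) (hl : l ≤ cobounded E) :
    HasExpTypeAlong (fun z => c + z) 0 l := by
  have hconst : (fun _ => c) =O[l] fun z : E => ‖z‖ := by
    refine .of_bound 1 (hl ?_)
    filter_upwards [eventually_cobounded_le_norm ‖c‖] with z hz
    rwa [norm_norm, one_mul]
  refine .of_isBigO_norm_pow (n := 1) ?_ hl
  simpa only [pow_one] using hconst.add (isBigO_refl _ l).norm_right

theorem hasExpTypeAlong_const_sub_inv {𝕜 : Type*} [NormedField 𝕜] {l : Filter 𝕜} (c : 𝕜)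
    (hl : l ≤ cobounded 𝕜) : HasExpTypeAlong (fun z => (c - z)⁻¹) 0 l := by
  refine .of_isBigO_one ?_ hl
  have hsub : Tendsto (fun z => c - z) l (cobounded 𝕜) := by
    simpa only [sub_eq_add_neg, Function.comp_def] using
      (tendsto_const_add_cobounded c).comp (tendsto_neg_cobounded.mono_left hl)
  exact (tendsto_inv₀_cobounded.comp hsub).isBigO_one ℝ

end ExponentialType

theorem norm_sin_le_exp_norm (z : ℂ) : ‖Complex.sin z‖ ≤ Real.exp ‖z‖ := by
  have hneg : ‖Complex.exp (-z * I)‖ ≤ Real.exp ‖z‖ := by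
    simpa using Complex.norm_exp_le_exp_norm (-z * I)
  have hpos : ‖Complex.exp (z * I)‖ ≤ Real.exp ‖z‖ := by
    simpa using Complex.norm_exp_le_exp_norm (z * I)
  have hsub := norm_sub_le (Complex.exp (-z * I)) (Complex.exp (z * I))
  rw [Complex.sin, norm_div, norm_mul, Complex.norm_I, mul_one, Complex.norm_ofNat]
  linarith

theorem hasExpTypeAlong_sin : HasExpTypeAlong Complex.sin 1 (cobounded ℂ) := by
  intro ε hε
  refine .of_forall fun z => (norm_sin_le_exp_norm z).trans (Real.exp_le_exp.2 ?_)
  nlinarith [norm_nonneg z]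

theorem norm_betaIntegral_le_inv_re {u v : ℂ} (hu : 0 < u.re) (hv : 1 ≤ v.re) :
    ‖betaIntegral u v‖ ≤ u.re⁻¹ := by
  have hbound : ∀ x ∈ Set.Ioo (0 : ℝ) 1,
      ‖(x : ℂ) ^ (u - 1) * (1 - (x : ℂ)) ^ (v - 1)‖ ≤ x ^ (u.re - 1) := by
    intro x hx
    have hx' : 0 < 1 - x := sub_pos.2 hx.2
    rw [norm_mul, norm_cpow_eq_rpow_re_of_pos hx.1, ← ofReal_one, ← ofReal_sub,
      norm_cpow_eq_rpow_re_of_pos hx']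
    simp only [sub_re, ofReal_re]
    exact mul_le_of_le_one_right (rpow_nonneg hx.1.le _)
      (rpow_le_one hx'.le (by linarith [hx.1]) (by linarith))
  calc ‖betaIntegral u v‖ ≤ ∫ x : ℝ in 0..1, x ^ (u.re - 1) := by
        refine intervalIntegral.norm_integral_le_of_norm_le zero_le_one ?_
          (intervalIntegral.intervalIntegrable_rpow' (by linarith))
        filter_upwards [MeasureTheory.Measure.ae_ne MeasureTheory.volume (1 : ℝ)] with x hx1 hx
        exact hbound x ⟨hx.1, hx.2.lt_of_ne hx1⟩
    _ = u.re⁻¹ := by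
        rw [integral_rpow (.inl (by linarith)), sub_add_cancel, one_rpow, zero_rpow hu.ne',
          sub_zero, one_div]

theorem Gamma_div_Gamma_add_eq_betaIntegral_div {s c : ℂ} (hs : 0 < s.re) (hc : 0 < c.re) :
    Complex.Gamma s / Complex.Gamma (c + s) = betaIntegral c s / Complex.Gamma c := by
  have hcs : 0 < (c + s).re := by rw [add_re]; exact add_pos hc hs
  rw [div_eq_div_iff (Gamma_ne_zero_of_re_pos hcs) (Gamma_ne_zero_of_re_pos hc),
    mul_comm (Complex.Gamma s), Complex.Gamma_mul_Gamma_eq_betaIntegral hc hs, mul_comm]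

theorem inv_Gamma_eq_sin_mul_Gamma_one_sub {s : ℂ} (hs : Complex.Gamma (1 - s) ≠ 0) :
    (Complex.Gamma s)⁻¹ = Complex.sin (π * s) / π * Complex.Gamma (1 - s) := by
  rw [← inv_div, ← Complex.Gamma_mul_Gamma_one_sub, mul_inv, inv_mul_cancel_right₀ hs]

/-- The entire function `1 / (Γ(a + w) Γ(b - w))` of `w`. The inverses take the correct value `0`
at the poles of `Γ`, because `Complex.Gamma` vanishes there. -/
noncomputable def invGammaProd (a b w : ℂ) : ℂ :=
  (Complex.Gamma (a + w))⁻¹ * (Complex.Gamma (b - w))⁻¹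

theorem differentiable_invGammaProd (a b : ℂ) : Differentiable ℂ (invGammaProd a b) :=
  (differentiable_one_div_Gamma.comp (differentiable_id.const_add a)).mul
    (differentiable_one_div_Gamma.comp (differentiable_id.const_sub b))

theorem invGammaProd_neg (a b w : ℂ) : invGammaProd a b (-w) = invGammaProd b a w := by
  rw [invGammaProd, invGammaProd, sub_neg_eq_add, ← sub_eq_add_neg, mul_comm]

theorem invGammaProd_eq_mul_add_one_left (a b w : ℂ) :
    invGammaProd a b w = (a + w) * invGammaProd (a + 1) b w := by
  rw [invGammaProd, invGammaProd, one_div_Gamma_eq_self_mul_one_div_Gamma_add_one (a + w),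
    add_right_comm, mul_assoc]

theorem invGammaProd_eq_inv_mul_sub_one_right {a b w : ℂ} (hw : b - 1 - w ≠ 0) :
    invGammaProd a b w = (b - 1 - w)⁻¹ * invGammaProd a (b - 1) w := by
  rw [invGammaProd, invGammaProd, one_div_Gamma_eq_self_mul_one_div_Gamma_add_one (b - 1 - w),
    show b - 1 - w + 1 = b - w by ring, mul_left_comm (b - 1 - w)⁻¹, inv_mul_cancel_left₀ hw]

section InvGammaProd

variable {a b : ℂ} {τ : ℝ} {l : Filter ℂ}

theorem HasExpTypeAlong.of_invGammaProd_add_one_left (hl : l ≤ cobounded ℂ)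
    (h : HasExpTypeAlong (invGammaProd (a + 1) b) τ l) :
    HasExpTypeAlong (invGammaProd a b) τ l := by
  rw [← zero_add τ, funext (invGammaProd_eq_mul_add_one_left a b)]
  exact (hasExpTypeAlong_const_add a hl).mul h

theorem HasExpTypeAlong.of_invGammaProd_sub_one_right (hl : l ≤ cobounded ℂ)
    (h : HasExpTypeAlong (invGammaProd a (b - 1)) τ l) :
    HasExpTypeAlong (invGammaProd a b) τ l := by
  have hne : ∀ᶠ w in l, w ≠ b - 1 := hl (eventually_ne_cobounded (b - 1))
  rw [← zero_add τ]
  refine ((hasExpTypeAlong_const_sub_inv (b - 1) hl).mul h).congr' ?_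
  filter_upwards [hne] with w hw
  exact (invGammaProd_eq_inv_mul_sub_one_right (sub_ne_zero.2 hw.symm)).symm

theorem invGammaProd_eq_sin_mul_betaIntegral {w : ℂ} (hb : b.re ≤ 0) (hab : 1 < a.re + b.re)
    (hw : 0 ≤ w.re) :
    invGammaProd a b w = Complex.sin (π * b + -π * w) *
      (betaIntegral (a + b - 1) (1 - b + w) / (π * Complex.Gamma (a + b - 1))) := by
  have hs : 0 < (1 - b + w).re := by simp only [add_re, sub_re, one_re]; linarith
  have hc : 0 < (a + b - 1).re := by simp only [add_re, sub_re, one_re]; linarith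
  have hreflect : (Complex.Gamma (b - w))⁻¹ =
      Complex.sin (π * (b - w)) / π * Complex.Gamma (1 - (b - w)) :=
    inv_Gamma_eq_sin_mul_Gamma_one_sub
      (Gamma_ne_zero_of_re_pos (by rwa [sub_sub_eq_add_sub, add_sub_right_comm]))
  have hquot := Gamma_div_Gamma_add_eq_betaIntegral_div hs hc
  rw [show a + b - 1 + (1 - b + w) = a + w by ring] at hquot
  rw [mul_comm (π : ℂ) (Complex.Gamma _), ← div_div, ← hquot, invGammaProd, hreflect,
    show 1 - (b - w) = 1 - b + w by ring, show π * (b - w) = π * b + -π * w by ring]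
  ring

theorem hasExpTypeAlong_invGammaProd_of_re_nonneg_of_lt (hb : b.re ≤ 0) (hab : 1 < a.re + b.re) :
    HasExpTypeAlong (invGammaProd a b) π (cobounded ℂ ⊓ 𝓟 {w | 0 ≤ w.re}) := by
  have hsin : HasExpTypeAlong (fun w => Complex.sin (π * b + -π * w)) π
      (cobounded ℂ ⊓ 𝓟 {w | 0 ≤ w.re}) := by
    simpa [abs_of_pos pi_pos] using
      (hasExpTypeAlong_sin.comp_affine zero_le_one (π * b) (-π)).mono inf_le_left
  have hright : ∀ᶠ w : ℂ in cobounded ℂ ⊓ 𝓟 {w | 0 ≤ w.re}, 0 ≤ w.re :=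
    mem_inf_of_right (mem_principal_self _)
  have hbeta : HasExpTypeAlong (fun w => betaIntegral (a + b - 1) (1 - b + w) /
      (π * Complex.Gamma (a + b - 1))) 0 (cobounded ℂ ⊓ 𝓟 {w | 0 ≤ w.re}) := by
    refine .of_isBigO_one (.of_bound
      ((a + b - 1).re⁻¹ / ‖π * Complex.Gamma (a + b - 1)‖) ?_) inf_le_left
    filter_upwards [hright] with w hw
    rw [norm_div, norm_one, mul_one]
    gcongr
    apply norm_betaIntegral_le_inv_re <;> simp only [add_re, sub_re, one_re] <;> linarith
  rw [← add_zero π]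
  refine (hsin.mul hbeta).congr' ?_
  filter_upwards [hright] with w hw
  exact (invGammaProd_eq_sin_mul_betaIntegral hb hab hw).symm

variable (a b)

theorem hasExpTypeAlong_invGammaProd_of_re_nonneg :
    HasExpTypeAlong (invGammaProd a b) π (cobounded ℂ ⊓ 𝓟 {w | 0 ≤ w.re}) := by
  obtain ⟨n, hn⟩ := exists_nat_gt (max b.re (1 - (a.re + b.re)))
  obtain ⟨hb, hab⟩ := max_lt_iff.1 hn
  clear hn
  induction n generalizing a b with
  | zero =>
    rw [Nat.cast_zero] at hb hab
    exact hasExpTypeAlong_invGammaProd_of_re_nonneg_of_lt hb.le (by linarith)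
  | succ n ih =>
    -- Raising `a` twice while lowering `b` once improves both conditions by one.
    push_cast at hb hab
    refine .of_invGammaProd_add_one_left inf_le_left <|
      .of_invGammaProd_add_one_left inf_le_left <|
      .of_invGammaProd_sub_one_right inf_le_left <| ih _ _ ?_ ?_ <;>
    simp only [add_re, sub_re, one_re] <;> linarith

theorem hasExpTypeAlong_invGammaProd : HasExpTypeAlong (invGammaProd a b) π (cobounded ℂ) := by
  have hneg : Tendsto Neg.neg (cobounded ℂ ⊓ 𝓟 {w | w.re ≤ 0}) (cobounded ℂ ⊓ 𝓟 {w | 0 ≤ w.re}) :=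
    tendsto_neg_cobounded.inf (tendsto_principal_principal.2 fun w hw => by simpa using hw)
  have hleft : HasExpTypeAlong (invGammaProd a b) π (cobounded ℂ ⊓ 𝓟 {w | w.re ≤ 0}) := by
    simpa only [invGammaProd_neg, mul_one] using
      (hasExpTypeAlong_invGammaProd_of_re_nonneg b a).comp pi_pos.le hneg inf_le_left zero_le_one
        (C := 0) fun w => by simp
  refine ((hasExpTypeAlong_invGammaProd_of_re_nonneg a b).sup hleft).mono ?_
  rw [← inf_sup_left, sup_principal]
  exact le_inf le_rfl (le_principal_iff.2 (univ_mem' fun w => le_total 0 w.re))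

end InvGammaProd

theorem one_div_Gamma_mul_Gamma_entire_expType_general (a b β : ℂ) (φ : ℂ → ℂ)
    (hφ : ∀ z : ℂ, φ z = 1 / (Complex.Gamma (a + β * z) * Complex.Gamma (b - β * z))) :
    Differentiable ℂ φ ∧
      ∀ ε > 0, ∃ R > 0, ∀ z : ℂ, R ≤ ‖z‖ →
        ‖φ z‖ ≤ Real.exp ((π * ‖β‖ + ε) * ‖z‖) := by
  obtain rfl : φ = fun z => invGammaProd a b (β * z) :=
    funext fun z => by rw [hφ, invGammaProd, one_div, mul_inv]
  have htype : HasExpTypeAlong (fun z => invGammaProd a b (β * z)) (π * ‖β‖) (cobounded ℂ) := by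
    simpa only [zero_add] using (hasExpTypeAlong_invGammaProd a b).comp_affine pi_pos.le 0 β
  exact ⟨(differentiable_invGammaProd a b).comp (differentiable_id.const_mul β),
    fun ε hε => htype.exists_radius hε⟩

/-- **The reciprocal double-Gamma function is entire of exponential type `πβ`.**
For `α, β > 0`, `φ(z) = 1/(Γ(α + βz)Γ(α − βz))` is entire and for every `ε > 0` there
is `R > 0` with `|φ(z)| ≤ exp((πβ + ε)|z|)` for all `|z| ≥ R`. -/
theorem one_div_Gamma_mul_Gamma_entire_expType
    (α β : ℝ) (hα : 0 < α) (hβ : 0 < β)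
    (φ : ℂ → ℂ)
    (hφ : ∀ z : ℂ, φ z = 1 / (Complex.Gamma (α + β * z) * Complex.Gamma (α - β * z))) :
    Differentiable ℂ φ ∧
      ∀ ε > 0, ∃ R > 0, ∀ z : ℂ, R ≤ ‖z‖ →
        ‖φ z‖ ≤ Real.exp ((Real.pi * β + ε) * ‖z‖) := by
  simpa only [norm_real, Real.norm_eq_abs, abs_of_pos hβ] using
    one_div_Gamma_mul_Gamma_entire_expType_general α α β φ hφ
end

section
/- Let α > 1 and β > 0. The function φ : ℝ → ℝ defined by φ(x) = 1/(Γ(α + βx) · Γ(α − βx)), where Γ is the real Gamma function, is both integrable and square-integrable on ℝ: ∫_{-∞}^{∞} |φ(x)| dx < ∞ and ∫_{-∞}^{∞} |φ(x)|² dx < ∞. -/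
open MeasureTheory Real

/-!
By the reflection formula, `1 / Γ(α - t) = Γ(1 - α + t) sin(π(α - t)) / π`, so for large `t` the
function `1 / (Γ(α + t) Γ(α - t))` is bounded by the quotient `Γ(t - α + 1) / Γ(t + α)`.
Log-convexity of `Γ` bounds this quotient by `(t - α) ^ (-(2 * α - 1))`. Since the function is
continuous and even in `t`, it lies in `L^p` whenever `1 < p * (2 * α - 1)`; the theorem is the
case `p = 1, 2`.
-/

open Asymptotics Filter
open scoped NNReal

section LpDecay

variable {E : Type*} [NormedAddCommGroup E]

theorem memLp_of_isBigO_atTop_rpow_neg_of_norm_even {f : ℝ → E} {s : ℝ} {p : ℝ≥0}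
    (hf : Continuous f) (hsymm : ∀ t, ‖f (-t)‖ = ‖f t‖)
    (hO : f =O[atTop] fun t ↦ t ^ (-s)) (hp : 1 < p * s) : MemLp f p := by
  have hp0 : p ≠ 0 := by
    rintro rfl
    norm_num at hp
  rw [← integrable_norm_rpow_iff hf.aestronglyMeasurable (mod_cast hp0) ENNReal.coe_ne_top,
    ENNReal.coe_toReal]
  have hcont : Continuous fun t ↦ ‖f t‖ ^ (p : ℝ) :=
    hf.norm.rpow_const fun _ ↦ Or.inr p.coe_nonneg
  have hdecay : (fun t ↦ ‖f t‖ ^ (p : ℝ)) =O[atTop] fun t ↦ t ^ (-(p * s)) := by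
    have hnonneg : ∀ᶠ t : ℝ in atTop, 0 ≤ t ^ (-s) := by
      filter_upwards [eventually_ge_atTop 0] with t ht using rpow_nonneg ht _
    refine (hO.norm_left.rpow p.coe_nonneg hnonneg).congr' .rfl ?_
    filter_upwards [eventually_ge_atTop 0] with t ht
    rw [← rpow_mul ht, neg_mul, mul_comm s]
  refine hcont.locallyIntegrable.integrable_of_isBigO_atTop_of_norm_isNegInvariant
    (.of_forall fun t ↦ by simp [hsymm]) hdecay ?_
  exact ⟨Set.Ioi 1, Ioi_mem_atTop 1, integrableOn_Ioi_rpow_of_lt (by linarith) one_pos⟩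

theorem memLp_comp_mul_left {f : ℝ → E} {p : ENNReal} (hf : MemLp f p) {c : ℝ} (hc : c ≠ 0) :
    MemLp (fun x ↦ f (c * x)) p := by
  refine (Homeomorph.mulLeft₀ c hc).measurableEmbedding.memLp_map_measure_iff.1 ?_
  rw [Homeomorph.coe_mulLeft₀, Real.map_volume_mul_left hc]
  exact hf.smul_measure ENNReal.ofReal_ne_top

end LpDecay

section Gamma

theorem continuous_inv_Gamma : Continuous fun x : ℝ ↦ (Gamma x)⁻¹ := by
  have hcomplex : Continuous fun x : ℝ ↦ ((Complex.Gamma x)⁻¹).re :=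
    Complex.continuous_re.comp
      (Complex.differentiable_one_div_Gamma.continuous.comp Complex.continuous_ofReal)
  simpa only [Complex.Gamma_ofReal, ← Complex.ofReal_inv, Complex.ofReal_re] using hcomplex

theorem rpow_mul_Gamma_add_one_le {x h : ℝ} (hx : 0 < x) (hh : 0 ≤ h) :
    x ^ h * Gamma (x + 1) ≤ Gamma (x + 1 + h) := by
  obtain rfl | hh := hh.eq_or_lt
  · simp
  have hΓx : 0 < Gamma x := Gamma_pos_of_pos hx
  have hΓx1 : 0 < Gamma (x + 1) := Gamma_pos_of_pos (by linarith)
  have hΓxh : 0 < Gamma (x + 1 + h) := Gamma_pos_of_pos (by linarith)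
  have hslope : log (Gamma (x + 1)) - log (Gamma x) ≤
      (log (Gamma (x + 1 + h)) - log (Gamma (x + 1))) / h := by
    simpa using convexOn_log_Gamma.slope_mono_adjacent (x := x) (y := x + 1) (z := x + 1 + h)
      hx (by simp; linarith) (by linarith) (by linarith)
  have hstep : log (Gamma (x + 1)) - log (Gamma x) = log x := by
    rw [Gamma_add_one hx.ne', log_mul hx.ne' hΓx.ne', add_sub_cancel_right]
  rw [hstep, le_div_iff₀ hh] at hslope
  rw [← log_le_log_iff (by positivity) hΓxh, log_mul (by positivity) hΓx1.ne', log_rpow hx]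
  linarith

theorem abs_inv_Gamma_le_Gamma_one_sub_div_pi {x : ℝ} (hx : x < 1) :
    |(Gamma x)⁻¹| ≤ Gamma (1 - x) / π := by
  have hΓ : 0 < Gamma (1 - x) := Gamma_pos_of_pos (by linarith)
  have hreflection : (Gamma x)⁻¹ = Gamma (1 - x) / π * sin (π * x) := by
    rw [div_mul_eq_mul_div, mul_div_assoc, ← inv_div, ← Gamma_mul_Gamma_one_sub]
    field_simp
  rw [hreflection, abs_mul, abs_of_pos (by positivity)]
  exact mul_le_of_le_one_right (by positivity) (abs_sin_le_one _)

theorem abs_inv_Gamma_add_mul_Gamma_sub_le {α t : ℝ} (hα : 1 / 2 ≤ α) (ht : α < t) :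
    |(Gamma (α + t) * Gamma (α - t))⁻¹| ≤ (t - α) ^ (-(2 * α - 1)) / π := by
  have htα : 0 < t - α := sub_pos.2 ht
  have hΓ : 0 < Gamma (α + t) := Gamma_pos_of_pos (by linarith)
  have hratio : (t - α) ^ (2 * α - 1) * Gamma (1 - (α - t)) ≤ Gamma (α + t) := by
    have h := rpow_mul_Gamma_add_one_le htα (h := 2 * α - 1) (by linarith)
    rwa [show t - α + 1 = 1 - (α - t) by ring,
      show 1 - (α - t) + (2 * α - 1) = α + t by ring] at h
  calc |(Gamma (α + t) * Gamma (α - t))⁻¹|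
      = (Gamma (α + t))⁻¹ * |(Gamma (α - t))⁻¹| := by
        rw [mul_inv, abs_mul, abs_of_pos (inv_pos.2 hΓ)]
    _ ≤ (Gamma (α + t))⁻¹ * (Gamma (1 - (α - t)) / π) := by
        gcongr
        exact abs_inv_Gamma_le_Gamma_one_sub_div_pi (by linarith)
    _ = (Gamma (α + t))⁻¹ * Gamma (1 - (α - t)) / π := (mul_div_assoc ..).symm
    _ ≤ (t - α) ^ (-(2 * α - 1)) / π := by
        gcongr
        rw [rpow_neg htα.le, inv_mul_le_iff₀ hΓ, ← div_eq_mul_inv, le_div_iff₀' (by positivity)]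
        exact hratio

theorem inv_Gamma_add_mul_Gamma_sub_isBigO_rpow {α : ℝ} (hα : 1 / 2 ≤ α) :
    (fun t ↦ (Gamma (α + t) * Gamma (α - t))⁻¹) =O[atTop] fun t ↦ t ^ (-(2 * α - 1)) := by
  refine .of_bound ((2⁻¹ : ℝ) ^ (-(2 * α - 1)) / π) ?_
  filter_upwards [eventually_ge_atTop (2 * α)] with t ht
  have ht0 : 0 < t := by linarith
  rw [norm_eq_abs, norm_of_nonneg (by positivity)]
  calc |(Gamma (α + t) * Gamma (α - t))⁻¹|
      ≤ (t - α) ^ (-(2 * α - 1)) / π := abs_inv_Gamma_add_mul_Gamma_sub_le hα (by linarith)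
    _ ≤ (2⁻¹ * t) ^ (-(2 * α - 1)) / π := by
        gcongr ?_ / π
        exact rpow_le_rpow_of_nonpos (by linarith) (by linarith) (by linarith)
    _ = 2⁻¹ ^ (-(2 * α - 1)) / π * t ^ (-(2 * α - 1)) := by
        rw [mul_rpow (by norm_num) ht0.le, mul_div_right_comm]

theorem memLp_inv_Gamma_add_mul_Gamma_sub {α : ℝ} {p : ℝ≥0} (hp : 1 < p * (2 * α - 1)) :
    MemLp (fun t ↦ (Gamma (α + t) * Gamma (α - t))⁻¹) p := by
  have hα : 1 / 2 ≤ α := by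
    have := pos_of_mul_pos_right (one_pos.trans hp) p.coe_nonneg
    linarith
  refine memLp_of_isBigO_atTop_rpow_neg_of_norm_even ?_ (fun t ↦ ?_)
    (inv_Gamma_add_mul_Gamma_sub_isBigO_rpow hα) hp
  · simp only [mul_inv]
    exact (continuous_inv_Gamma.comp (continuous_const_add α)).mul
      (continuous_inv_Gamma.comp (continuous_sub_left α))
  · rw [← sub_eq_add_neg, sub_neg_eq_add, mul_comm]

end Gamma

theorem one_div_Gamma_mul_Gamma_integrable_sq_integrable_general {α β : ℝ} {p : ℝ≥0}
    (hp : 1 < p * (2 * α - 1)) (hβ : β ≠ 0) :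
    MemLp (fun x ↦ 1 / (Gamma (α + β * x) * Gamma (α - β * x))) p := by
  simpa only [one_div] using memLp_comp_mul_left (memLp_inv_Gamma_add_mul_Gamma_sub hp) hβ

/-- **Integrability of the reciprocal double-Gamma wave function.** For `α > 1` and
`β > 0`, the function `φ(x) = 1/(Γ(α + βx)Γ(α − βx))` is integrable and
square-integrable on ℝ. -/
theorem one_div_Gamma_mul_Gamma_integrable_sq_integrable
    (α β : ℝ) (hα : 1 < α) (hβ : 0 < β)
    (φ : ℝ → ℝ)
    (hφ : ∀ x : ℝ, φ x = 1 / (Real.Gamma (α + β * x) * Real.Gamma (α - β * x))) :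
    Integrable φ ∧ Integrable (fun x : ℝ => |φ x| ^ 2) := by
  have hLp (p : ℝ≥0) (hp : 1 ≤ p) : MemLp φ p := by
    have hp' : (1 : ℝ) ≤ p := mod_cast hp
    rw [funext hφ]
    exact one_div_Gamma_mul_Gamma_integrable_sq_integrable_general
      (one_lt_mul_of_le_of_lt hp' (by linarith)) hβ.ne'
  exact ⟨memLp_one_iff_integrable.1 (hLp 1 le_rfl), (hLp 2 one_le_two).norm.integrable_sq⟩
end
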